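/- Every infinite trace of a parallel composition decomposes into component traces at least one of which is infinite: if u ∈ traces^ω(P ‖_A Q), then there exist u₁ ∈ traces(P) ∪ traces^ω(P) and u₂ ∈ traces(Q) ∪ traces^ω(Q) with u ∈ u₁ ‖_A u₂ and (u₁ infinite or u₂ infinite). -/

import Mathlib

/-! A synchronisation `Sync A s t w` is witnessed by tagging each event of `w` with the side that
performs it. For fixed `u` there are finitely many tagged words over each prefix of `u`, so Kőnig's
lemma yields a tagging of all of `u` whose two components stay in `T₁` and `T₂`. The components of
the growing prefixes form chains, and their limits are the required traces. Since a synchronised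
word is no longer than its two components together, the limits cannot both be finite. -/

open scoped Classical

namespace CSPLL

variable {E : Type*}

/-- The length-`n` prefix of an infinite word. -/
def pref (u : ℕ → E) (n : ℕ) : List E := (List.range n).map u

/-- `u ∈ traces^ω(T)`: every finite prefix of `u` lies in `T`. -/
def InfTrace (T : Set (List E)) (u : ℕ → E) : Prop := ∀ n, pref u n ∈ T

def PrefixClosed (T : Set (List E)) : Prop := ∀ s t : List E, s ++ t ∈ T → s ∈ T

/-- `Sync A s t u` : `u ∈ s ‖_A t`, the synchronised-interleaving operator on
finite traces (events in `A` must be matched by both sides, other events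
interleave freely). -/
inductive Sync (A : Set E) : List E → List E → List E → Prop
  | nil : Sync A [] [] []
  | left {b s t u} : b ∉ A → Sync A s t u → Sync A (b :: s) t (b :: u)
  | right {b s t u} : b ∉ A → Sync A s t u → Sync A s (b :: t) (b :: u)
  | both {a s t u} : a ∈ A → Sync A s t u → Sync A (a :: s) (a :: t) (a :: u)
  | stuckLeft {a t} : a ∈ A → Sync A [] (a :: t) []
  | stuckRight {a s} : a ∈ A → Sync A (a :: s) [] []

/-- The length-`n` prefix of a finite-or-infinite trace. -/
def prefOf : List E ⊕ (ℕ → E) → ℕ → List E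
  | Sum.inl s, n => s.take n
  | Sum.inr v, n => pref v n

/-- Membership of a finite-or-infinite trace in `traces(T) ∪ traces^ω(T)`. -/
def MemTr (T : Set (List E)) : List E ⊕ (ℕ → E) → Prop
  | Sum.inl s => s ∈ T
  | Sum.inr v => InfTrace T v

/-- `u ∈ u₁ ‖_A u₂` for the infinite trace `u` and finite-or-infinite traces
`u₁, u₂`: extension of `‖_A` via limits of chains of synchronised prefixes. -/
def InfSyncG (A : Set E) (x y : List E ⊕ (ℕ → E)) (u : ℕ → E) : Prop :=
  ∃ k₁ k₂ : ℕ → ℕ, Monotone k₁ ∧ Monotone k₂ ∧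
    (∀ m, ∃ n, prefOf x m <+: prefOf x (k₁ n)) ∧
    (∀ m, ∃ n, prefOf y m <+: prefOf y (k₂ n)) ∧
    ∀ n, Sync A (prefOf x (k₁ n)) (prefOf y (k₂ n)) (pref u n)

section Words

variable {α β : Type*}

theorem length_pref (u : ℕ → α) (n : ℕ) : (pref u n).length = n := by
  simp [pref]

theorem map_pref (f : α → β) (u : ℕ → α) (n : ℕ) : (pref u n).map f = pref (f ∘ u) n := by
  simp [pref]

theorem take_pref (u : ℕ → α) (m n : ℕ) : (pref u n).take m = pref u (min m n) := by
  simp [pref, ← List.map_take, List.take_range]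

theorem pref_prefix_pref (u : ℕ → α) {m n : ℕ} (h : m ≤ n) : pref u m <+: pref u n := by
  simpa only [take_pref, min_eq_left h] using List.take_prefix m (pref u n)

theorem pref_injective : Function.Injective (pref : (ℕ → α) → ℕ → List α) := by
  intro u v h
  funext i
  simpa [pref, List.range_succ] using congrArg List.getLast? (congrFun h (i + 1))

theorem eq_pref_of_prefix {u : ℕ → α} {w : List α} {n : ℕ} (h : w <+: pref u n) :
    w = pref u w.length := by
  have hle : w.length ≤ n := length_pref u n ▸ h.length_le
  rw [List.prefix_iff_eq_take.1 h, take_pref, length_pref, min_eq_left hle]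

theorem PrefixClosed.mem_of_prefix {T : Set (List α)} (hT : PrefixClosed T) {s t : List α}
    (h : s <+: t) (ht : t ∈ T) : s ∈ T := by
  obtain ⟨r, rfl⟩ := h
  exact hT s r ht

theorem memTr_of_forall_prefOf_mem {T : Set (List α)} {x : List α ⊕ (ℕ → α)}
    (h : ∀ n, prefOf x n ∈ T) : MemTr T x := by
  rcases x with s | v
  · simpa only [prefOf, List.take_length, MemTr] using h s.length
  · exact h

end Words

section Chains

variable {α : Type*} {L : ℕ → List α} {x : List α ⊕ (ℕ → α)} {T : Set (List α)}

/-- The finite-or-infinite word `x` is the limit (supremum in the prefix order) of the chain `L`: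
every member of `L` is the prefix of `x` of its length, and every finite prefix of `x` is reached
by `L`. -/
def IsChainLimit (L : ℕ → List α) (x : List α ⊕ (ℕ → α)) : Prop :=
  (∀ n, prefOf x (L n).length = L n) ∧ ∀ m, ∃ n, prefOf x m <+: L n

theorem IsChainLimit.memTr (hx : IsChainLimit L x) (hT : PrefixClosed T) (hL : ∀ n, L n ∈ T) :
    MemTr T x :=
  memTr_of_forall_prefOf_mem fun m =>
    let ⟨n, hn⟩ := hx.2 m
    hT.mem_of_prefix hn (hL n)

theorem exists_forall_prefix_of_bddAbove (hL : ∀ m n, m ≤ n → L m <+: L n)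
    (hB : BddAbove (Set.range fun n => (L n).length)) : ∃ N, ∀ n, L n <+: L N := by
  obtain ⟨N, hN⟩ := Nat.sSup_mem (Set.range_nonempty _) hB
  have hmax : ∀ n, (L n).length ≤ (L N).length := fun n =>
    (le_csSup hB ⟨n, rfl⟩).trans_eq hN.symm
  refine ⟨N, fun n => ?_⟩
  rcases le_total n N with h | h
  · exact hL n N h
  · rw [(hL N n h).eq_of_length_le (hmax n)]

theorem exists_forall_pref_eq_of_not_bddAbove (hL : ∀ m n, m ≤ n → L m <+: L n)
    (hB : ¬ BddAbove (Set.range fun n => (L n).length)) :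
    ∃ v : ℕ → α, ∀ n, pref v (L n).length = L n := by
  have hlong : ∀ i, ∃ n, i < (L n).length := by
    simpa only [not_bddAbove_iff, Set.exists_range_iff] using hB
  choose k hk using hlong
  refine ⟨fun i => (L (k i))[i]'(hk i), fun n => List.ext_getElem (length_pref _ _) ?_⟩
  intro i _ hi
  simp only [pref, List.getElem_map, List.getElem_range]
  rcases le_total n (k i) with h | h
  · exact ((hL _ _ h).getElem hi).symm
  · exact (hL _ _ h).getElem (hk i)

theorem exists_isChainLimit (hL : ∀ m n, m ≤ n → L m <+: L n) : ∃ x, IsChainLimit L x := by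
  by_cases hB : BddAbove (Set.range fun n => (L n).length)
  · obtain ⟨N, hN⟩ := exists_forall_prefix_of_bddAbove hL hB
    exact ⟨Sum.inl (L N), fun n => (List.prefix_iff_eq_take.1 (hN n)).symm,
      fun m => ⟨N, List.take_prefix m (L N)⟩⟩
  · obtain ⟨v, hv⟩ := exists_forall_pref_eq_of_not_bddAbove hL hB
    refine ⟨Sum.inr v, hv, fun m => ?_⟩
    obtain ⟨_, ⟨n, rfl⟩, hn⟩ := not_bddAbove_iff.1 hB m
    exact ⟨n, hv n ▸ pref_prefix_pref v hn.le⟩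

theorem exists_infTrace_of_finite_levels (hT : PrefixClosed T)
    (hfin : ∀ n, {s ∈ T | s.length = n}.Finite)
    (hne : ∀ n, {s ∈ T | s.length = n}.Nonempty) : ∃ v, InfTrace T v := by
  have (n : ℕ) : Finite {s ∈ T | s.length = n} := hfin n
  have (n : ℕ) : Nonempty {s ∈ T | s.length = n} := (hne n).to_subtype
  let truncate {i j : ℕ} (hij : i ≤ j) (s : {s ∈ T | s.length = j}) : {s ∈ T | s.length = i} :=
    ⟨s.1.take i, hT.mem_of_prefix (List.take_prefix i s.1) s.2.1, by
      rw [List.length_take, s.2.2, min_eq_left hij]⟩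
  obtain ⟨L, hL⟩ := exists_seq_forall_proj_of_forall_finite truncate
    (fun i s => Subtype.ext (List.take_of_length_le s.2.2.le))
    (fun i j k hij _ s => Subtype.ext (by simp [truncate, List.take_take, hij]))
    (fun _ _ => Set.toFinite _)
  have hchain : ∀ m n, m ≤ n → (L m).1 <+: (L n).1 := fun m n h =>
    hL h ▸ List.take_prefix m (L n).1
  have hlen : ∀ n, (L n).1.length = n := fun n => (L n).2.2
  obtain ⟨v, hv⟩ := exists_forall_pref_eq_of_not_bddAbove hchain
    (by simpa only [hlen, Set.range_id'] using not_bddAbove_univ)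
  refine ⟨v, fun n => ?_⟩
  have hvn : pref v n = (L n).1 := by simpa only [hlen] using hv n
  exact hvn ▸ (L n).2.1

end Chains

section Synchronisation

variable {A : Set E} {s t w : List E} {u : ℕ → E} {x y : List E ⊕ (ℕ → E)}

theorem Sync.length_le (h : Sync A s t w) : w.length ≤ s.length + t.length := by
  induction h <;> grind

theorem InfSyncG.isRight_or_isRight (h : InfSyncG A x y u) :
    x.isRight = true ∨ y.isRight = true := by
  obtain ⟨k₁, k₂, -, -, -, -, hsync⟩ := h
  rcases x with s | v
  · rcases y with t | v
    · have hlen := (hsync (s.length + t.length + 1)).length_le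
      simp only [prefOf, length_pref, List.length_take] at hlen
      omega
    · exact Or.inr rfl
  · exact Or.inl rfl

theorem infSyncG_of_isChainLimit {L M : ℕ → List E} (hL : ∀ m n, m ≤ n → L m <+: L n)
    (hM : ∀ m n, m ≤ n → M m <+: M n) (hx : IsChainLimit L x) (hy : IsChainLimit M y)
    (hsync : ∀ n, Sync A (L n) (M n) (pref u n)) : InfSyncG A x y u := by
  refine ⟨fun n => (L n).length, fun n => (M n).length, fun m n h => (hL m n h).length_le,
    fun m n h => (hM m n h).length_le, ?_, ?_, ?_⟩
  · simpa only [hx.1] using hx.2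
  · simpa only [hy.1] using hy.2
  · simpa only [hx.1, hy.1] using hsync

/-- The events of a tagged word that one side of `‖_A` takes part in. Each event carries the side
performing it, `true` for the left and `false` for the right; the tag of an event in `A` is ignored,
as both sides perform it. -/
noncomputable def component (A : Set E) (side : Bool) (m : List (E × Bool)) : List E :=
  (m.filter fun p => p.1 ∈ A ∨ p.2 = side).map Prod.fst

theorem component_cons (A : Set E) (side b : Bool) (e : E) (m : List (E × Bool)) :
    component A side ((e, b) :: m) =
      if e ∈ A ∨ b = side then e :: component A side m else component A side m := by
  by_cases h : e ∈ A ∨ b = side <;> simp [component, h]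

theorem component_prefix_component (A : Set E) (side : Bool) {m m' : List (E × Bool)}
    (h : m <+: m') : component A side m <+: component A side m' :=
  (h.filter _).map _

theorem sync_component (A : Set E) (m : List (E × Bool)) :
    Sync A (component A true m) (component A false m) (m.map Prod.fst) := by
  induction m with
  | nil => exact Sync.nil
  | cons p m ih =>
    obtain ⟨e, side⟩ := p
    by_cases he : e ∈ A
    · simpa [component_cons, he] using Sync.both he ih
    · cases side
      · simpa [component_cons, he] using Sync.right he ih
      · simpa [component_cons, he] using Sync.left he ih

/-- The components are only prefixes of `s` and `t`, which may continue with events of `A` that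
remain blocked. -/
theorem Sync.exists_tagging (h : Sync A s t w) : ∃ m : List (E × Bool),
    m.map Prod.fst = w ∧ component A true m <+: s ∧ component A false m <+: t := by
  induction h with
  | nil | stuckLeft | stuckRight => exact ⟨[], by simp [component]⟩
  | @left e _ _ _ he _ ih =>
    obtain ⟨m, rfl, hs, ht⟩ := ih
    exact ⟨(e, true) :: m, by simp [component_cons, he, hs, ht]⟩
  | @right e _ _ _ he _ ih =>
    obtain ⟨m, rfl, hs, ht⟩ := ih
    exact ⟨(e, false) :: m, by simp [component_cons, he, hs, ht]⟩
  | @both e _ _ _ he _ ih =>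
    obtain ⟨m, rfl, hs, ht⟩ := ih
    exact ⟨(e, true) :: m, by simp [component_cons, he, hs, ht]⟩

theorem finite_setOf_map_fst_eq {α β : Type*} [Finite β] (w : List α) :
    {m : List (α × β) | m.map Prod.fst = w}.Finite := by
  refine ((List.finite_length_eq β w.length).image w.zip).subset ?_
  rintro m rfl
  exact ⟨m.map Prod.snd, by simp, by simp [List.zip_map']⟩

theorem exists_infinite_tagging {T₁ T₂ : Set (List E)} (h₁ : PrefixClosed T₁)
    (h₂ : PrefixClosed T₂) (hu : InfTrace {w | ∃ s ∈ T₁, ∃ t ∈ T₂, Sync A s t w} u) :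
    ∃ m : ℕ → E × Bool, Prod.fst ∘ m = u ∧
      ∀ n, component A true (pref m n) ∈ T₁ ∧ component A false (pref m n) ∈ T₂ := by
  let taggings : Set (List (E × Bool)) := {m | m.map Prod.fst = pref u m.length ∧
    component A true m ∈ T₁ ∧ component A false m ∈ T₂}
  have hclosed : PrefixClosed taggings := by
    rintro m m' ⟨hm, hm₁, hm₂⟩
    have hpre : m <+: m ++ m' := List.prefix_append m m'
    have hword : m.map Prod.fst <+: pref u (m ++ m').length := hm ▸ hpre.map Prod.fst
    refine ⟨?_, h₁.mem_of_prefix (component_prefix_component A true hpre) hm₁,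
      h₂.mem_of_prefix (component_prefix_component A false hpre) hm₂⟩
    simpa only [List.length_map] using eq_pref_of_prefix hword
  have hfin : ∀ n, {m ∈ taggings | m.length = n}.Finite := by
    refine fun n => (finite_setOf_map_fst_eq (pref u n)).subset ?_
    rintro m ⟨hm, rfl⟩
    exact hm.1
  have hne : ∀ n, {m ∈ taggings | m.length = n}.Nonempty := by
    intro n
    obtain ⟨s, hs, t, ht, hsync⟩ := hu n
    obtain ⟨m, hm, hms, hmt⟩ := hsync.exists_tagging
    have hlen : m.length = n := by
      simpa only [List.length_map, length_pref] using congrArg List.length hm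
    exact ⟨m, ⟨hlen ▸ hm, h₁.mem_of_prefix hms hs, h₂.mem_of_prefix hmt ht⟩, hlen⟩
  obtain ⟨m, hm⟩ := exists_infTrace_of_finite_levels hclosed hfin hne
  refine ⟨m, pref_injective (funext fun n => ?_), fun n => (hm n).2⟩
  simpa only [map_pref, length_pref] using (hm n).1

end Synchronisation

theorem inft_parallel_general (A : Set E) (T₁ T₂ : Set (List E))
    (h₁ : PrefixClosed T₁) (h₂ : PrefixClosed T₂) (u : ℕ → E)
    (hu : InfTrace {w | ∃ s ∈ T₁, ∃ t ∈ T₂, Sync A s t w} u) :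
    ∃ x y : List E ⊕ (ℕ → E), MemTr T₁ x ∧ MemTr T₂ y ∧ InfSyncG A x y u ∧
      (x.isRight = true ∨ y.isRight = true) := by
  obtain ⟨m, rfl, hm⟩ := exists_infinite_tagging h₁ h₂ hu
  have hchain (side : Bool) (i j : ℕ) (hij : i ≤ j) :
      component A side (pref m i) <+: component A side (pref m j) :=
    component_prefix_component A side (pref_prefix_pref m hij)
  obtain ⟨x, hx⟩ := exists_isChainLimit (hchain true)
  obtain ⟨y, hy⟩ := exists_isChainLimit (hchain false)
  have hsync : InfSyncG A x y (Prod.fst ∘ m) :=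
    infSyncG_of_isChainLimit (hchain true) (hchain false) hx hy fun n =>
      map_pref Prod.fst m n ▸ sync_component A (pref m n)
  exact ⟨x, y, hx.memTr h₁ fun n => (hm n).1, hy.memTr h₂ fun n => (hm n).2, hsync,
    hsync.isRight_or_isRight⟩

/-- Every infinite trace of a parallel composition `P ‖_A Q` decomposes into
component traces, at least one of which is infinite. -/
theorem inft_parallel [Fintype E] (A : Set E) (T₁ T₂ : Set (List E))
    (h₁ : PrefixClosed T₁) (h₂ : PrefixClosed T₂) (u : ℕ → E)
    (hu : InfTrace {w | ∃ s ∈ T₁, ∃ t ∈ T₂, Sync A s t w} u) :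
    ∃ x y : List E ⊕ (ℕ → E), MemTr T₁ x ∧ MemTr T₂ y ∧ InfSyncG A x y u ∧
      (x.isRight = true ∨ y.isRight = true) :=
  inft_parallel_general A T₁ T₂ h₁ h₂ u hu

end CSPLL
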